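/- Let M ≥ 2 and K be natural numbers. Let p : Fin K → ℝ satisfy p k ≥ 0 for all k and ∑ₖ p k = 1. Let a : Fin K → ℕ satisfy 1 ≤ a k < M for all k. For each k let f k, g k : ℂ → ℝ be measurable functions lying in L² of the Lebesgue (volume) measure on ℂ, with ∫_ℂ (f k α)² dα ≤ (2/π)^(2·(a k) − 1) / (2·(a k)) and ∫_ℂ (g k α)² dα ≤ (2/π)^(2·(M − a k) − 1) / (2·(M − a k)). Then ∫_ℂ |∑ₖ p k · f k α · g k α| dα ≤ (2/π)^(M−1) / (2·√(M−1)). -/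

import Mathlib

open MeasureTheory Real

/-! Balls of `L¹` are convex, so it suffices to bound the `L¹` norm of a single product.
By Cauchy–Schwarz and the two `L²` bounds with `a + b = M`, this norm is at most
`(2/π)^(M-1) / (2√(ab))`. The worst bipartition is `1 | M - 1`, as `ab - (a + b - 1) =
(a - 1)(b - 1) ≥ 0`. -/

section

variable {Ω E A : Type*} {mΩ : MeasurableSpace Ω} {μ : Measure Ω}
  [NormedAddCommGroup E] [NormedSpace ℝ E] [NormedRing A] {c : ℝ} {a b : ℕ}

lemma convexOn_integral_norm :
    ConvexOn ℝ {h : Ω → E | Integrable h μ} fun h ↦ ∫ x, ‖h x‖ ∂μ := by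
  have hconvex : Convex ℝ {h : Ω → E | Integrable h μ} :=
    fun _ hu _ hv s t _ _ _ ↦ (hu.smul s).add (hv.smul t)
  refine integral_convexOn_of_integrand_ae hconvex (.of_forall fun x ↦ ?_) fun h hh ↦ hh.norm
  exact ((convexOn_norm convex_univ).comp_linearMap (LinearMap.proj x)).subset
    (Set.subset_univ _) hconvex

lemma integral_norm_mul_le_sqrt_mul_sqrt {u v : Ω → A} (hu : MemLp u 2 μ) (hv : MemLp v 2 μ) :
    ∫ x, ‖u x * v x‖ ∂μ ≤ √(∫ x, ‖u x‖ ^ 2 ∂μ) * √(∫ x, ‖v x‖ ^ 2 ∂μ) :=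
  calc ∫ x, ‖u x * v x‖ ∂μ
      ≤ ∫ x, ‖u x‖ * ‖v x‖ ∂μ :=
        integral_mono (hu.integrable_mul hv).norm (hu.norm.integrable_mul hv.norm)
          fun x ↦ norm_mul_le (u x) (v x)
    _ ≤ √(∫ x, ‖u x‖ ^ 2 ∂μ) * √(∫ x, ‖v x‖ ^ 2 ∂μ) := by
        have holder := integral_mul_norm_le_Lp_mul_Lq (μ := μ) (f := u) (g := v)
          Real.HolderConjugate.two_two (by simpa using hu) (by simpa using hv)
        simpa only [rpow_two, ← sqrt_eq_rpow] using holder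

lemma sqrt_pow_div_mul_sqrt_pow_div (hc : 0 ≤ c) (ha : a ≠ 0) (hb : b ≠ 0) :
    √(c ^ (2 * a - 1) / (2 * a)) * √(c ^ (2 * b - 1) / (2 * b)) =
      c ^ (a + b - 1) / (2 * √(a * b)) := by
  have hexp : 2 * a - 1 + (2 * b - 1) = (a + b - 1) * 2 := by omega
  calc √(c ^ (2 * a - 1) / (2 * a)) * √(c ^ (2 * b - 1) / (2 * b))
      = √((c ^ (a + b - 1)) ^ 2 / (2 ^ 2 * (a * b))) := by
        rw [← sqrt_mul (by positivity), div_mul_div_comm, ← pow_add, hexp, pow_mul]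
        ring_nf
    _ = c ^ (a + b - 1) / (2 * √(a * b)) := by
        rw [sqrt_div (by positivity), sqrt_mul (by positivity), sqrt_sq (by positivity),
          sqrt_sq zero_le_two]

lemma pow_div_two_mul_sqrt_mul_le (hc : 0 ≤ c) (ha : a ≠ 0) (hb : b ≠ 0) :
    c ^ (a + b - 1) / (2 * √(a * b)) ≤
      c ^ (a + b - 1) / (2 * √((a : ℝ) + b - 1)) := by
  have ha' : (1 : ℝ) ≤ a := Nat.one_le_cast.2 (Nat.one_le_iff_ne_zero.2 ha)
  have hb' : (1 : ℝ) ≤ b := Nat.one_le_cast.2 (Nat.one_le_iff_ne_zero.2 hb)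
  have hpos : 0 < √((a : ℝ) + b - 1) := sqrt_pos.2 (by linarith)
  have hle : (a : ℝ) + b - 1 ≤ a * b := by
    linarith [mul_nonneg (sub_nonneg.2 ha') (sub_nonneg.2 hb')]
  gcongr

lemma integral_norm_mul_le_of_integral_norm_sq_le (hc : 0 ≤ c)
    (ha : a ≠ 0) (hb : b ≠ 0) {u v : Ω → A} (hu : MemLp u 2 μ) (hv : MemLp v 2 μ)
    (huI : ∫ x, ‖u x‖ ^ 2 ∂μ ≤ c ^ (2 * a - 1) / (2 * a))
    (hvI : ∫ x, ‖v x‖ ^ 2 ∂μ ≤ c ^ (2 * b - 1) / (2 * b)) :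
    ∫ x, ‖u x * v x‖ ∂μ ≤ c ^ (a + b - 1) / (2 * √((a : ℝ) + b - 1)) :=
  calc ∫ x, ‖u x * v x‖ ∂μ
      ≤ √(∫ x, ‖u x‖ ^ 2 ∂μ) * √(∫ x, ‖v x‖ ^ 2 ∂μ) := integral_norm_mul_le_sqrt_mul_sqrt hu hv
    _ ≤ √(c ^ (2 * a - 1) / (2 * a)) * √(c ^ (2 * b - 1) / (2 * b)) := by gcongr
    _ = c ^ (a + b - 1) / (2 * √(a * b)) := sqrt_pow_div_mul_sqrt_pow_div hc ha hb
    _ ≤ c ^ (a + b - 1) / (2 * √((a : ℝ) + b - 1)) := pow_div_two_mul_sqrt_mul_le hc ha hb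

theorem wigner_slice_abs_volume_bound_general [NormedAlgebra ℝ A] {ι : Type*} [Fintype ι]
    (hc : 0 ≤ c) {M : ℕ} {p : ι → ℝ} (hp : ∀ k, 0 ≤ p k) (hpsum : ∑ k, p k = 1)
    {a b : ι → ℕ} (ha : ∀ k, a k ≠ 0) (hb : ∀ k, b k ≠ 0) (hab : ∀ k, a k + b k = M)
    {f g : ι → Ω → A} (hf : ∀ k, MemLp (f k) 2 μ) (hg : ∀ k, MemLp (g k) 2 μ)
    (hfI : ∀ k, ∫ x, ‖f k x‖ ^ 2 ∂μ ≤ c ^ (2 * a k - 1) / (2 * a k))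
    (hgI : ∀ k, ∫ x, ‖g k x‖ ^ 2 ∂μ ≤ c ^ (2 * b k - 1) / (2 * b k)) :
    ∫ x, ‖∑ k, p k • (f k x * g k x)‖ ∂μ ≤ c ^ (M - 1) / (2 * √((M : ℝ) - 1)) := by
  have hmem : ∀ k, f k * g k ∈ {h : Ω → A | Integrable h μ ∧
      ∫ x, ‖h x‖ ∂μ ≤ c ^ (M - 1) / (2 * √((M : ℝ) - 1))} := by
    refine fun k ↦ ⟨(hf k).integrable_mul (hg k), ?_⟩
    rw [← hab k, Nat.cast_add]
    exact integral_norm_mul_le_of_integral_norm_sq_le hc (ha k) (hb k) (hf k) (hg k)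
      (hfI k) (hgI k)
  simpa only [Finset.sum_apply, Pi.smul_apply, Pi.mul_apply] using
    ((convexOn_integral_norm.convex_le _).sum_mem (fun k _ ↦ hp k) hpsum fun k _ ↦ hmem k).2

end

/-- Analytic core of Theorem 1: a convex combination of products of L²-bounded
slice factors has absolute volume at most `(2/π)^(M-1) / (2√(M-1))`. -/
theorem wigner_slice_abs_volume_bound
    (M K : ℕ) (hM : 2 ≤ M)
    (p : Fin K → ℝ) (hp : ∀ k, 0 ≤ p k) (hpsum : ∑ k, p k = 1)
    (a : Fin K → ℕ) (ha1 : ∀ k, 1 ≤ a k) (haM : ∀ k, a k < M)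
    (f g : Fin K → ℂ → ℝ)
    (hfm : ∀ k, Measurable (f k)) (hgm : ∀ k, Measurable (g k))
    (hf2 : ∀ k, MemLp (f k) 2 volume) (hg2 : ∀ k, MemLp (g k) 2 volume)
    (hfI : ∀ k, ∫ α : ℂ, (f k α) ^ 2
        ≤ (2 / π) ^ (2 * a k - 1) / (2 * (a k : ℝ)))
    (hgI : ∀ k, ∫ α : ℂ, (g k α) ^ 2
        ≤ (2 / π) ^ (2 * (M - a k) - 1) / (2 * ((M - a k : ℕ) : ℝ))) :
    ∫ α : ℂ, |∑ k, p k * f k α * g k α|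
      ≤ (2 / π) ^ (M - 1) / (2 * Real.sqrt ((M : ℝ) - 1)) := by
  simpa [mul_assoc] using wigner_slice_abs_volume_bound_general (by positivity : 0 ≤ 2 / π)
    hp hpsum (fun k ↦ Nat.ne_zero_of_lt (ha1 k)) (fun k ↦ Nat.sub_ne_zero_of_lt (haM k))
    (fun k ↦ Nat.add_sub_of_le (haM k).le) hf2 hg2 (by simpa using hfI) (by simpa using hgI)
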